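/- There exists a finite directed graph G with positive arc weights, all of whose vertices are reachable from every vertex, such that the union A of all minimum spanning arborescences of G (taken over all choices of root vertex) satisfies both: (i) some arc of the directed ultrametric backbone of G is not an arc of A, and (ii) some arc of A is not an arc of the directed ultrametric backbone of G. -/

import Mathlib

/-!
The tool is linear programming duality for arborescences. Weigh finitely many nonempty vertex sets
`S` by `y S ≥ 0` so that every arc costs at least the total weight of the sets it enters. Every
subgraph spanning from `r` has an arc into each `S` avoiding `r`, so it costs at least the sum of
`y S` over these sets. If some spanning subgraph attains the bound, then no optimal one has an arc
which costs more than the sets it enters.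

The witness has the arcs `0 → 1` (weight 5), `0 → 2` (3), `1 → 2` (1), `2 → 0` (1), `2 → 1` (4).
Weighing `{0}`, `{1}`, `{2}`, `{1, 2}` by `1, 4, 1, 1` makes every arc tight except `0 → 2`, and
for each root there is a tree attaining the bound: `0 → 1 → 2`, `1 → 2 → 0` and the star at `2`.

* `0 → 2` is the lightest arc out of `0`, hence in the backbone; not being tight, it is in no
  optimal arborescence.
* `0 → 1` lies in the optimal arborescence `0 → 1 → 2`, but not in the backbone, since both arcs of
  `0 → 2 → 1` are lighter.
-/

open SimpleGraph

/-- The directed ultrametric backbone of the directed graph `A` with arc weights `w`: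
the arc `(i,j)` is retained iff there is no directed path from `i` to `j` all of whose
arcs have weight strictly less than `w i j`. -/
def DirUltrametricBackbone {V : Type*} (A : V → V → Prop) (w : V → V → ℝ)
    (i j : V) : Prop :=
  A i j ∧ ¬ Relation.TransGen (fun a b => A a b ∧ w a b < w i j) i j

/-- The total arc weight of a directed graph `B` on a finite vertex type. -/
noncomputable def dirWeight {V : Type*} [Finite V] (w : V → V → ℝ)
    (B : V → V → Prop) : ℝ :=
  ∑ p ∈ {p : V × V | B p.1 p.2}.toFinite.toFinset, w p.1 p.2

/-- `B` is a minimum spanning arborescence of `A` rooted at `r`: a subgraph of `A` in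
which every vertex other than `r` is reachable from `r` by a directed path, of minimal
total arc weight among all such subgraphs. -/
def IsMinSpanningArborescence {V : Type*} [Finite V] (A : V → V → Prop) (w : V → V → ℝ)
    (r : V) (B : V → V → Prop) : Prop :=
  (∀ i j, B i j → A i j) ∧
  (∀ v, v ≠ r → Relation.TransGen B r v) ∧
  ∀ B' : V → V → Prop, (∀ i j, B' i j → A i j) →
    (∀ v, v ≠ r → Relation.TransGen B' r v) →
    dirWeight w B ≤ dirWeight w B'

section Backbone

variable {V : Type*} {A : V → V → Prop} {w : V → V → ℝ} {i j k : V}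

lemma dirUltrametricBackbone_of_forall_le (hij : A i j) (hmin : ∀ k, A i k → w i j ≤ w i k) :
    DirUltrametricBackbone A w i j := by
  refine ⟨hij, fun hpath ↦ ?_⟩
  obtain ⟨k, ⟨hik, hlt⟩, -⟩ := Relation.TransGen.head'_iff.mp hpath
  exact (hmin k hik).not_gt hlt

lemma not_dirUltrametricBackbone_of_lt (hik : A i k) (hkj : A k j) (hik_lt : w i k < w i j)
    (hkj_lt : w k j < w i j) : ¬ DirUltrametricBackbone A w i j :=
  fun h ↦ h.2 (.head ⟨hik, hik_lt⟩ (.single ⟨hkj, hkj_lt⟩))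

end Backbone

section DirWeight

variable {V : Type*} [Finite V] {w w' : V → V → ℝ} {B : V → V → Prop} {i j : V}

lemma dirWeight_le_dirWeight (h : ∀ i j, B i j → w i j ≤ w' i j) :
    dirWeight w B ≤ dirWeight w' B :=
  Finset.sum_le_sum fun p hp ↦ h p.1 p.2 (by simpa using hp)

lemma dirWeight_lt_dirWeight (h : ∀ i j, B i j → w i j ≤ w' i j) (hij : B i j)
    (hlt : w i j < w' i j) : dirWeight w B < dirWeight w' B :=
  Finset.sum_lt_sum (fun p hp ↦ h p.1 p.2 (by simpa using hp)) ⟨(i, j), by simpa using hij, hlt⟩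

end DirWeight

/-- `B` is a subgraph of `A` in which every vertex is reachable from `r`: the competitors in
`IsMinSpanningArborescence`. -/
def IsSpanningFrom {V : Type*} (A : V → V → Prop) (r : V) (B : V → V → Prop) : Prop :=
  (∀ i j, B i j → A i j) ∧ ∀ v, v ≠ r → Relation.TransGen B r v

section Spanning

variable {V : Type*} {A B : V → V → Prop} {r v : V}

lemma IsSpanningFrom.reflTransGen (hB : IsSpanningFrom A r B) (v : V) :
    Relation.ReflTransGen A r v := by
  obtain rfl | hv := eq_or_ne v r
  · exact .refl
  · exact (Relation.TransGen.mono hB.1 _ _ (hB.2 v hv)).to_reflTransGen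

lemma exists_arc_entering_of_transGen {X : Set V} (h : Relation.TransGen B r v) (hr : r ∉ X)
    (hv : v ∈ X) : ∃ i j, B i j ∧ i ∉ X ∧ j ∈ X := by
  by_contra! hX
  induction h with
  | single hrv => exact hX _ _ hrv hr hv
  | tail _ huv ih => exact ih (by_contra fun hu ↦ hX _ _ huv hu hv)

lemma IsSpanningFrom.exists_arc_entering (hB : IsSpanningFrom A r B) {X : Set V}
    (hX : X.Nonempty) (hr : r ∉ X) : ∃ i j, B i j ∧ i ∉ X ∧ j ∈ X := by
  obtain ⟨v, hv⟩ := hX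
  exact exists_arc_entering_of_transGen (hB.2 v (ne_of_mem_of_not_mem hv hr)) hr hv

lemma isMinSpanningArborescence_iff [Finite V] {w : V → V → ℝ} :
    IsMinSpanningArborescence A w r B ↔
      IsSpanningFrom A r B ∧ ∀ C, IsSpanningFrom A r C → dirWeight w B ≤ dirWeight w C := by
  simp only [IsMinSpanningArborescence, IsSpanningFrom, and_assoc, and_imp]

end Spanning

section CutPacking

variable {V ι : Type*} [DecidableEq V] [Fintype ι]

/-- The total weight of the sets `S k` that the arc from `i` to `j` enters, when `S k` is weighted
by `y k`. -/
def cutLoad (S : ι → Finset V) (y : ι → ℝ) (i j : V) : ℝ :=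
  ∑ k with i ∉ S k ∧ j ∈ S k, y k

/-- The total weight of the sets `S k` that avoid `r`: the objective of the dual linear program for
arborescences rooted at `r`. -/
def cutValue (S : ι → Finset V) (y : ι → ℝ) (r : V) : ℝ :=
  ∑ k with r ∉ S k, y k

/-- The weights `y` of the sets `S` are feasible for the dual linear program of the minimum
spanning arborescence problem. Sets containing the root are harmless, so that one packing serves
all roots. -/
structure IsCutPacking (A : V → V → Prop) (w : V → V → ℝ) (S : ι → Finset V) (y : ι → ℝ) :
    Prop where
  nonempty (k : ι) : (S k).Nonempty
  nonneg (k : ι) : 0 ≤ y k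
  cutLoad_le (i j : V) : A i j → cutLoad S y i j ≤ w i j

variable [Finite V] {A B C : V → V → Prop} {w : V → V → ℝ} {S : ι → Finset V} {y : ι → ℝ}
  {r i j : V}

lemma cutValue_le_dirWeight_cutLoad (hS : ∀ k, (S k).Nonempty) (hy : ∀ k, 0 ≤ y k)
    (hB : IsSpanningFrom A r B) : cutValue S y r ≤ dirWeight (cutLoad S y) B := by
  set arcs := {p : V × V | B p.1 p.2}.toFinite.toFinset with harcs
  have le_sum_entering (k : ι) (hk : r ∉ S k) :
      y k ≤ ∑ p ∈ arcs, if p.1 ∉ S k ∧ p.2 ∈ S k then y k else 0 := by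
    obtain ⟨i, j, hij, henters⟩ := hB.exists_arc_entering (X := S k) (hS k) hk
    have hmem : (i, j) ∈ arcs := by simpa [harcs] using hij
    refine le_of_eq_of_le (if_pos henters).symm
      (Finset.single_le_sum (f := fun p : V × V ↦ if p.1 ∉ S k ∧ p.2 ∈ S k then y k else 0)
        (fun p _ ↦ ?_) hmem)
    exact ite_nonneg (hy k) le_rfl
  calc cutValue S y r
      ≤ ∑ k with r ∉ S k, ∑ p ∈ arcs, if p.1 ∉ S k ∧ p.2 ∈ S k then y k else 0 :=
        Finset.sum_le_sum fun k hk ↦ le_sum_entering k (Finset.mem_filter.mp hk).2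
    _ ≤ ∑ k, ∑ p ∈ arcs, if p.1 ∉ S k ∧ p.2 ∈ S k then y k else 0 :=
        Finset.sum_le_univ_sum_of_nonneg fun k ↦
          Finset.sum_nonneg fun p _ ↦ ite_nonneg (hy k) le_rfl
    _ = dirWeight (cutLoad S y) B := by
        rw [Finset.sum_comm]
        simp only [dirWeight, cutLoad, Finset.sum_filter, harcs]

lemma IsCutPacking.cutValue_le_dirWeight (hy : IsCutPacking A w S y)
    (hB : IsSpanningFrom A r B) : cutValue S y r ≤ dirWeight w B :=
  (cutValue_le_dirWeight_cutLoad hy.nonempty hy.nonneg hB).trans <|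
    dirWeight_le_dirWeight fun i j hij ↦ hy.cutLoad_le i j (hB.1 i j hij)

lemma IsCutPacking.cutValue_lt_dirWeight (hy : IsCutPacking A w S y) (hB : IsSpanningFrom A r B)
    (hij : B i j) (hslack : cutLoad S y i j < w i j) : cutValue S y r < dirWeight w B :=
  (cutValue_le_dirWeight_cutLoad hy.nonempty hy.nonneg hB).trans_lt <|
    dirWeight_lt_dirWeight (fun i j hij ↦ hy.cutLoad_le i j (hB.1 i j hij)) hij hslack

lemma IsCutPacking.isMinSpanningArborescence (hy : IsCutPacking A w S y)
    (hB : IsSpanningFrom A r B) (hval : dirWeight w B = cutValue S y r) :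
    IsMinSpanningArborescence A w r B :=
  isMinSpanningArborescence_iff.mpr ⟨hB, fun _ hC ↦ hval.trans_le (hy.cutValue_le_dirWeight hC)⟩

lemma IsCutPacking.not_arc_of_cutLoad_lt (hy : IsCutPacking A w S y)
    (hC : IsSpanningFrom A r C) (hval : dirWeight w C = cutValue S y r)
    (hB : IsMinSpanningArborescence A w r B) (hslack : cutLoad S y i j < w i j) : ¬ B i j := by
  intro hij
  obtain ⟨hspan, hmin⟩ := isMinSpanningArborescence_iff.mp hB
  exact (hmin C hC).not_gt (hval.trans_lt (hy.cutValue_lt_dirWeight hspan hij hslack))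

end CutPacking

/-- The tree rooted at `r` in which the parent of `j ≠ r` is `parent j`; the value `parent r` is
irrelevant. It is a tree only if iterating `parent` leads from every vertex to `r`. -/
def parentArc {V : Type*} (parent : V → V) (r i j : V) : Prop :=
  j ≠ r ∧ i = parent j

section ParentArc

variable {V : Type*} {A : V → V → Prop} {parent : V → V} {r v : V}

lemma transGen_parentArc_of_iterate_eq {n : ℕ} (hn : parent^[n] v = r) (hv : v ≠ r) :
    Relation.TransGen (parentArc parent r) r v := by
  induction n generalizing v with
  | zero => exact absurd hn hv
  | succ n ih =>
    have hlast : parentArc parent r (parent v) v := ⟨hv, rfl⟩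
    by_cases hpv : parent v = r
    · exact .single (hpv ▸ hlast)
    · exact (ih hn hpv).tail hlast

lemma isSpanningFrom_parentArc (harc : ∀ v, v ≠ r → A (parent v) v)
    (hroot : ∀ v, ∃ n, parent^[n] v = r) : IsSpanningFrom A r (parentArc parent r) := by
  refine ⟨?_, fun v hv ↦ (hroot v).elim fun n hn ↦ transGen_parentArc_of_iterate_eq hn hv⟩
  rintro _ j ⟨hj, rfl⟩
  exact harc j hj

lemma dirWeight_parentArc [Fintype V] [DecidableEq V] (w : V → V → ℝ) (parent : V → V) (r : V) :
    dirWeight w (parentArc parent r) = ∑ v with v ≠ r, w (parent v) v := by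
  have harcs : {p : V × V | parentArc parent r p.1 p.2}.toFinite.toFinset =
      ({v | v ≠ r} : Finset V).image fun v ↦ (parent v, v) := by
    ext ⟨i, j⟩
    simp [parentArc, eq_comm]
  rw [dirWeight, harcs, Finset.sum_image fun u _ v _ huv ↦ congrArg Prod.snd huv]

end ParentArc

section Witness

/-- The arc weights of the witness; the entry `0` marks an absent arc. -/
def witnessWeight : Fin 3 → Fin 3 → ℝ :=
  ![![0, 5, 3], ![0, 0, 1], ![1, 4, 0]]

/-- The arcs of the witness: the pairs of positive weight. -/
def witnessArc (i j : Fin 3) : Prop :=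
  0 < witnessWeight i j

/-- The parent maps of the minimum spanning arborescences of the witness, one for each root. -/
def witnessParent : Fin 3 → Fin 3 → Fin 3 :=
  ![![0, 0, 1], ![2, 1, 1], ![2, 2, 2]]

/-- The sets of the optimal dual solution of the witness. -/
def witnessCut : Fin 4 → Finset (Fin 3) :=
  ![{0}, {1}, {2}, {1, 2}]

/-- The set weights of the optimal dual solution of the witness. -/
def witnessDual : Fin 4 → ℝ :=
  ![1, 4, 1, 1]

lemma witnessArc_irrefl (i : Fin 3) : ¬ witnessArc i i := by
  fin_cases i <;> simp [witnessArc, witnessWeight]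

lemma cutLoad_witness :
    cutLoad witnessCut witnessDual = ![![0, 5, 2], ![1, 0, 1], ![1, 4, 0]] := by
  have four_add_one : (4 : ℝ) + 1 = 5 := by norm_num
  ext i j
  rw [cutLoad, Finset.sum_filter, Fin.sum_univ_four]
  fin_cases i <;> fin_cases j <;>
    simp [witnessCut, witnessDual, one_add_one_eq_two, four_add_one]

lemma cutValue_witness : cutValue witnessCut witnessDual = ![6, 2, 5] := by
  have four_add_one : (4 : ℝ) + 1 = 5 := by norm_num
  have five_add_one : (5 : ℝ) + 1 = 6 := by norm_num
  have one_add_four : (1 : ℝ) + 4 = 5 := by norm_num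
  ext r
  rw [cutValue, Finset.sum_filter, Fin.sum_univ_four]
  fin_cases r <;>
    simp [witnessCut, witnessDual, one_add_one_eq_two, four_add_one, five_add_one,
      one_add_four]

lemma isCutPacking_witness :
    IsCutPacking witnessArc witnessWeight witnessCut witnessDual where
  nonempty := by decide
  nonneg k := by fin_cases k <;> simp [witnessDual]
  cutLoad_le i j hij := by
    have two_le_three : (2 : ℝ) ≤ 3 := by norm_num
    rw [cutLoad_witness]
    fin_cases i <;> fin_cases j <;> simp_all [witnessArc, witnessWeight]

lemma cutLoad_witness_zero_two_lt :
    cutLoad witnessCut witnessDual 0 2 < witnessWeight 0 2 := by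
  rw [cutLoad_witness]
  exact show (2 : ℝ) < 3 by norm_num

lemma isSpanningFrom_witness (r : Fin 3) :
    IsSpanningFrom witnessArc r (parentArc (witnessParent r) r) := by
  refine isSpanningFrom_parentArc (fun v hv ↦ ?_) fun v ↦ ⟨2, by revert r v; decide⟩
  fin_cases r <;> fin_cases v <;> simp_all [witnessArc, witnessWeight, witnessParent]

lemma dirWeight_witness (r : Fin 3) :
    dirWeight witnessWeight (parentArc (witnessParent r) r) =
      cutValue witnessCut witnessDual r := by
  have five_add_one : (5 : ℝ) + 1 = 6 := by norm_num
  have one_add_four : (1 : ℝ) + 4 = 5 := by norm_num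
  rw [dirWeight_parentArc, Finset.sum_filter, Fin.sum_univ_three, cutValue_witness]
  fin_cases r <;>
    simp [witnessWeight, witnessParent, one_add_one_eq_two, five_add_one, one_add_four]

lemma dirUltrametricBackbone_witness_zero_two :
    DirUltrametricBackbone witnessArc witnessWeight 0 2 := by
  refine dirUltrametricBackbone_of_forall_le (show (0 : ℝ) < 3 by norm_num) fun k hk ↦ ?_
  fin_cases k
  · exact absurd hk (lt_irrefl 0)
  · exact show (3 : ℝ) ≤ 5 by norm_num
  · exact le_rfl

lemma not_dirUltrametricBackbone_witness_zero_one :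
    ¬ DirUltrametricBackbone witnessArc witnessWeight 0 1 :=
  not_dirUltrametricBackbone_of_lt (k := 2) (show (0 : ℝ) < 3 by norm_num)
    (show (0 : ℝ) < 4 by norm_num) (show (3 : ℝ) < 5 by norm_num) (show (4 : ℝ) < 5 by norm_num)

end Witness

/-- There exists a finite weighted directed graph `G`, all of whose vertices are
reachable from every vertex, such that the union `A` of all minimum spanning
arborescences of `G` (over all roots) (i) lacks an arc of the directed ultrametric
backbone, and (ii) has an arc that is not in the directed ultrametric backbone. -/
theorem exists_dir_backbone_ne_union_arborescences :
    ∃ (n : ℕ) (A : Fin n → Fin n → Prop) (w : Fin n → Fin n → ℝ),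
      (∀ i, ¬ A i i) ∧ (∀ i j, A i j → 0 < w i j) ∧
      (∀ i j : Fin n, Relation.ReflTransGen A i j) ∧
      (∃ i j, DirUltrametricBackbone A w i j ∧
        ¬ ∃ (r : Fin n) (B : Fin n → Fin n → Prop),
          IsMinSpanningArborescence A w r B ∧ B i j) ∧
      (∃ i j, (∃ (r : Fin n) (B : Fin n → Fin n → Prop),
          IsMinSpanningArborescence A w r B ∧ B i j) ∧
        ¬ DirUltrametricBackbone A w i j) := by
  refine ⟨3, witnessArc, witnessWeight, witnessArc_irrefl, fun _ _ hij ↦ hij,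
    fun i j ↦ (isSpanningFrom_witness i).reflTransGen j,
    ⟨0, 2, dirUltrametricBackbone_witness_zero_two, ?_⟩,
    ⟨0, 1, ⟨0, parentArc (witnessParent 0) 0, ?_, ?_⟩,
      not_dirUltrametricBackbone_witness_zero_one⟩⟩
  · rintro ⟨r, B, hB, h02⟩
    exact isCutPacking_witness.not_arc_of_cutLoad_lt (isSpanningFrom_witness r)
      (dirWeight_witness r) hB cutLoad_witness_zero_two_lt h02
  · exact isCutPacking_witness.isMinSpanningArborescence (isSpanningFrom_witness 0)
      (dirWeight_witness 0)
  · exact ⟨by decide, rfl⟩
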